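/- For the Curie–Weiss model without external field at inverse temperature 0 < β < 1, there exists a constant C > 0 depending only on β such that for all N ≥ 1, d_Kol(W, Z) = sup_{x∈ℝ} |P(W ≤ x) − P(Z ≤ x)| ≤ C/√N, where Z is a standard normal random variable. -/

import Mathlib

open MeasureTheory ProbabilityTheory Real

noncomputable section

/-- The spin value of a Boolean coordinate: `true ↦ +1`, `false ↦ −1`. -/
def cwSpin (b : Bool) : ℝ := if b then 1 else -1

/-- The total magnetization `s(x) = x₁ + ⋯ + x_N`. -/
def cwS {N : ℕ} (x : Fin N → Bool) : ℝ := ∑ i, cwSpin (x i)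

/-- The Curie–Weiss Gibbs weight `h(x) = exp(β s(x)²/(2N))` (relative to the uniform
distribution on `{−1,1}^N`). -/
def cwWeight (β : ℝ) {N : ℕ} (x : Fin N → Bool) : ℝ :=
  Real.exp (β * (cwS x) ^ 2 / (2 * N))

/-- The Curie–Weiss normalizing constant `Σ_x h(x)`. -/
def cwZ (β : ℝ) (N : ℕ) : ℝ := ∑ x : Fin N → Bool, cwWeight β x

/-- The Curie–Weiss probability of the configuration `x` (the uniform base measure cancels
in the tilted law). -/
def cwProb (β : ℝ) {N : ℕ} (x : Fin N → Bool) : ℝ := cwWeight β x / cwZ β N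

/-- The standardized magnetization `W = s(Y)/σ_N` with `σ_N² = N/(1−β)`. -/
def cwW (β : ℝ) {N : ℕ} (x : Fin N → Bool) : ℝ :=
  cwS x / Real.sqrt ((N : ℝ) / (1 - β))

/-- The distribution function of the standard normal law. -/
def stdNormalCdf (x : ℝ) : ℝ := ((gaussianReal 0 1) (Set.Iic x)).toReal

lemma stdNormalCdf_nonneg (x : ℝ) : 0 ≤ stdNormalCdf x := ENNReal.toReal_nonneg

lemma stdNormalCdf_le_one (x : ℝ) : stdNormalCdf x ≤ 1 :=
  measureReal_le_one

lemma stdNormalCdf_mono : Monotone stdNormalCdf := fun _ _ hxy =>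
  measureReal_mono (Set.Iic_subset_Iic.2 hxy)

lemma stdNormalPDF_eq (x : ℝ) :
    gaussianPDFReal 0 1 x = (√(2 * π))⁻¹ * exp (-x ^ 2 / 2) := by
  simp [gaussianPDFReal]

lemma stdNormalPDF_pos (x : ℝ) : 0 < gaussianPDFReal 0 1 x :=
  gaussianPDFReal_pos 0 1 x one_ne_zero

lemma continuous_stdNormalPDF : Continuous (gaussianPDFReal 0 1) := by
  have : gaussianPDFReal 0 1 = fun x : ℝ => (√(2 * π))⁻¹ * exp (-x ^ 2 / 2) :=
    funext stdNormalPDF_eq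
  rw [this]
  fun_prop

lemma hasDerivAt_stdNormalPDF (x : ℝ) :
    HasDerivAt (gaussianPDFReal 0 1) (-x * gaussianPDFReal 0 1 x) x := by
  have : gaussianPDFReal 0 1 = fun x : ℝ => (√(2 * π))⁻¹ * exp (-x ^ 2 / 2) :=
    funext stdNormalPDF_eq
  rw [this]
  have h := (((hasDerivAt_pow 2 x).neg.div_const 2).exp).const_mul (√(2 * π))⁻¹
  refine h.congr_deriv ?_
  simp
  ring

lemma stdNormalPDF_le_one (x : ℝ) : gaussianPDFReal 0 1 x ≤ 1 := by
  rw [stdNormalPDF_eq]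
  have h1 : (√(2 * π))⁻¹ ≤ 1 := by
    apply inv_le_one_of_one_le₀
    rw [Real.one_le_sqrt]
    nlinarith [Real.pi_gt_three]
  have h2 : exp (-x ^ 2 / 2) ≤ 1 := Real.exp_le_one_iff.2 (by nlinarith [sq_nonneg x])
  calc _ ≤ (1 : ℝ) * 1 := by gcongr
    _ = 1 := one_mul 1

lemma stdNormalPDF_lower {x : ℝ} (hx : x ^ 2 ≤ 1) : 1 ≤ 6 * gaussianPDFReal 0 1 x := by
  rw [stdNormalPDF_eq]
  have h1 : (1 / 3 : ℝ) ≤ (√(2 * π))⁻¹ := by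
    rw [one_div]
    apply inv_anti₀ (by positivity)
    rw [Real.sqrt_le_left (by norm_num)]
    nlinarith [Real.pi_lt_d2]
  have h2 : (1 / 2 : ℝ) ≤ exp (-x ^ 2 / 2) := by
    have := Real.add_one_le_exp (-x ^ 2 / 2)
    linarith
  have : (1 / 3 : ℝ) * (1 / 2) ≤ (√(2 * π))⁻¹ * exp (-x ^ 2 / 2) := by gcongr
  linarith

lemma stdNormalCdf_eq_integral (x : ℝ) :
    stdNormalCdf x = ∫ y in Set.Iic x, gaussianPDFReal 0 1 y := by
  rw [stdNormalCdf, gaussianReal_apply_eq_integral 0 one_ne_zero, ENNReal.toReal_ofReal]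
  exact setIntegral_nonneg measurableSet_Iic fun y _ => (stdNormalPDF_pos y).le

lemma hasDerivAt_stdNormalCdf (x : ℝ) :
    HasDerivAt stdNormalCdf (gaussianPDFReal 0 1 x) x := by
  have h : stdNormalCdf = fun y => stdNormalCdf 0 + ∫ u in (0 : ℝ)..y, gaussianPDFReal 0 1 u := by
    ext y
    rw [← intervalIntegral.integral_Iic_sub_Iic (integrable_gaussianPDFReal 0 1).integrableOn
      (integrable_gaussianPDFReal 0 1).integrableOn, ← stdNormalCdf_eq_integral,
      ← stdNormalCdf_eq_integral]
    ring
  rw [h]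
  exact (intervalIntegral.integral_hasDerivAt_right
    (continuous_stdNormalPDF.intervalIntegrable _ _)
    (continuous_stdNormalPDF.stronglyMeasurableAtFilter _ _)
    continuous_stdNormalPDF.continuousAt).const_add _

lemma one_sub_stdNormalCdf (x : ℝ) :
    1 - stdNormalCdf x = ∫ y in Set.Ioi x, gaussianPDFReal 0 1 y := by
  have h := integral_add_compl (measurableSet_Iic (a := x)) (integrable_gaussianPDFReal 0 1)
  rw [integral_gaussianPDFReal_eq_one 0 one_ne_zero, Set.compl_Iic,
    ← stdNormalCdf_eq_integral] at h
  linarith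

lemma stdNormalPDF_neg (x : ℝ) : gaussianPDFReal 0 1 (-x) = gaussianPDFReal 0 1 x := by
  simp [stdNormalPDF_eq]

lemma stdNormalCdf_neg (x : ℝ) : stdNormalCdf (-x) = 1 - stdNormalCdf x := by
  rw [one_sub_stdNormalCdf, stdNormalCdf_eq_integral,
    ← integral_comp_neg_Ioi x (gaussianPDFReal 0 1)]
  simp_rw [stdNormalPDF_neg]

lemma stdNormalCdf_sub_le {x y : ℝ} : |stdNormalCdf y - stdNormalCdf x| ≤ |y - x| := by
  have := convex_univ.norm_image_sub_le_of_norm_hasDerivWithin_le (C := 1) (x := x) (y := y)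
    (fun z _ => (hasDerivAt_stdNormalCdf z).hasDerivWithinAt)
    (fun z _ => by
      rw [Real.norm_of_nonneg (stdNormalPDF_pos z).le]; exact stdNormalPDF_le_one z)
    (Set.mem_univ x) (Set.mem_univ y)
  simpa using this

/-- Mills' bound for the Gaussian tail. -/
lemma mul_one_sub_stdNormalCdf_le (x : ℝ) :
    x * (1 - stdNormalCdf x) ≤ gaussianPDFReal 0 1 x := by
  have hint : Integrable (fun y : ℝ => y * gaussianPDFReal 0 1 y) := by
    have := (integrable_mul_exp_neg_mul_sq (b := 1 / 2) (by norm_num)).const_mul (√(2 * π))⁻¹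
    refine this.congr (Filter.Eventually.of_forall fun y => ?_)
    simp only [stdNormalPDF_eq]
    rw [show -(1 / 2) * y ^ 2 = -y ^ 2 / 2 by ring]
    ring
  have hlim : Filter.Tendsto (fun y => -gaussianPDFReal 0 1 y) Filter.atTop (nhds (-0)) := by
    refine Filter.Tendsto.neg ?_
    have h1 : Filter.Tendsto (fun y : ℝ => (√(2 * π))⁻¹ * exp (-y)) Filter.atTop (nhds 0) := by
      simpa using (Real.tendsto_exp_neg_atTop_nhds_zero).const_mul (√(2 * π))⁻¹
    refine squeeze_zero' (Filter.Eventually.of_forall fun y => (stdNormalPDF_pos y).le) ?_ h1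
    filter_upwards [Filter.eventually_ge_atTop 2] with y hy
    rw [stdNormalPDF_eq]
    gcongr
    nlinarith
  have hder : ∀ y ∈ Set.Ici x, HasDerivAt (fun y => -gaussianPDFReal 0 1 y)
      (y * gaussianPDFReal 0 1 y) y := fun y _ =>
    (hasDerivAt_stdNormalPDF y).neg.congr_deriv (by ring)
  have h := integral_Ioi_of_hasDerivAt_of_tendsto' hder hint.integrableOn hlim
  rw [one_sub_stdNormalCdf, ← integral_const_mul]
  calc ∫ y in Set.Ioi x, x * gaussianPDFReal 0 1 y
      ≤ ∫ y in Set.Ioi x, y * gaussianPDFReal 0 1 y := by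
        refine setIntegral_mono_on ((integrable_gaussianPDFReal 0 1).const_mul x).integrableOn
          hint.integrableOn measurableSet_Ioi fun y hy => ?_
        exact mul_le_mul_of_nonneg_right (le_of_lt hy) (stdNormalPDF_pos y).le
    _ = gaussianPDFReal 0 1 x := by rw [h]; ring

lemma one_sub_stdNormalCdf_le {x : ℝ} (hx : 0 ≤ x) :
    1 - stdNormalCdf x ≤ 6 * gaussianPDFReal 0 1 x := by
  rcases le_total x 1 with h | h
  · have := stdNormalPDF_lower (x := x) (by nlinarith)
    linarith [stdNormalCdf_nonneg x]
  · have := mul_one_sub_stdNormalCdf_le x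
    nlinarith [stdNormalCdf_le_one x, stdNormalPDF_pos x]

lemma stdNormalCdf_mul_one_sub_le (x : ℝ) :
    stdNormalCdf x * (1 - stdNormalCdf x) ≤ 6 * gaussianPDFReal 0 1 x ∧
      |x| * (stdNormalCdf x * (1 - stdNormalCdf x)) ≤ gaussianPDFReal 0 1 x := by
  wlog hx : 0 ≤ x generalizing x
  · have h := this (-x) (by linarith)
    rw [stdNormalCdf_neg, stdNormalPDF_neg, abs_neg, sub_sub_cancel,
      mul_comm (1 - stdNormalCdf x)] at h
    exact h
  have h0 := stdNormalCdf_nonneg x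
  have h1 := stdNormalCdf_le_one x
  have hle : stdNormalCdf x * (1 - stdNormalCdf x) ≤ 1 - stdNormalCdf x := by nlinarith
  refine ⟨hle.trans (one_sub_stdNormalCdf_le hx), ?_⟩
  rw [abs_of_nonneg hx]
  exact (mul_le_mul_of_nonneg_left hle hx).trans (mul_one_sub_stdNormalCdf_le x)

/-- The trapezoidal rule along a solution of Stein's equation `f' = x f + h`. -/
lemma stein_trapezoid {f : ℝ → ℝ} {a b h K M : ℝ} (hab : a < b)
    (hf : ∀ x ∈ Set.Icc a b, HasDerivAt f (x * f x + h) x)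
    (hK : ∀ x ∈ Set.Icc a b, |f x| ≤ K) (hxf : ∀ x ∈ Set.Icc a b, |x * f x| ≤ 1)
    (hh : |h| ≤ 1) (ha : |a| ≤ M) (hb : |b| ≤ M) :
    |f b - f a - (b - a) * ((a * f a + b * f b) / 2 + h)| ≤ (b - a) ^ 2 * (K + 2 * M) := by
  obtain ⟨c, hc, hslope⟩ := exists_hasDerivAt_eq_slope f (fun x => x * f x + h) hab
    (fun x hx => (hf x hx).continuousAt.continuousWithinAt)
    (fun x hx => hf x (Set.Ioo_subset_Icc_self hx))
  have hba : 0 < b - a := sub_pos.2 hab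
  have hM : 0 ≤ M := (abs_nonneg a).trans ha
  have hcI := Set.Ioo_subset_Icc_self hc
  have hlip : ∀ x ∈ Set.Icc a b, |c * f c - x * f x| ≤ (K + 2 * M) * (b - a) := by
    intro x hx
    have h1 := (convex_Icc a b).norm_image_sub_le_of_norm_hasDerivWithin_le
      (f := fun x => x * f x) (f' := fun x => 1 * f x + x * (x * f x + h)) (C := K + 2 * M)
      (fun y hy => ((hasDerivAt_id y).mul (hf y hy)).hasDerivWithinAt)
      (fun y hy => by
        have hyM : |y| ≤ M := by
          rw [abs_le] at ha hb ⊢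
          exact ⟨by linarith [hy.1], by linarith [hy.2]⟩
        have h2 : |y * f y + h| ≤ 2 := by
          linarith [abs_add_le (y * f y) h, hxf y hy]
        calc ‖1 * f y + y * (y * f y + h)‖ ≤ |f y| + |y| * |y * f y + h| := by
              rw [Real.norm_eq_abs, one_mul, ← abs_mul]; exact abs_add_le _ _
          _ ≤ K + M * 2 := by gcongr; exact hK y hy
          _ = K + 2 * M := by ring)
      hx hcI
    refine h1.trans ?_
    have hK0 : 0 ≤ K := (abs_nonneg _).trans (hK c hcI)
    gcongr
    rw [Real.norm_eq_abs, abs_le]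
    exact ⟨by linarith [hcI.1, hx.2], by linarith [hcI.2, hx.1]⟩
  have hinc : f b - f a = (b - a) * (c * f c + h) := by
    rw [hslope]; field_simp
  have ha' := hlip a (Set.left_mem_Icc.2 hab.le)
  have hb' := hlip b (Set.right_mem_Icc.2 hab.le)
  rw [hinc, show (b - a) * (c * f c + h) - (b - a) * ((a * f a + b * f b) / 2 + h)
    = (b - a) * ((c * f c - a * f a) / 2 + (c * f c - b * f b) / 2) by ring, abs_mul,
    abs_of_pos hba, pow_two, mul_assoc]
  gcongr
  rw [abs_le] at ha' hb' ⊢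
  constructor <;> linarith

/-- A bounded solution of Stein's equation for the half-line `(-∞, t]`, with the discretised
equation holding on intervals that do not contain `t` in their interior. -/
lemma exists_stein_solution (t : ℝ) : ∃ f : ℝ → ℝ, (∀ x, |f x| ≤ 6) ∧
    (∀ a b M, a < b → b ≤ t → |a| ≤ M → |b| ≤ M →
      |f b - f a - (b - a) * ((a * f a + b * f b) / 2 + (1 - stdNormalCdf t))| ≤
        (b - a) ^ 2 * (6 + 2 * M)) ∧
    (∀ a b M, a < b → t ≤ a → |a| ≤ M → |b| ≤ M →
      |f b - f a - (b - a) * ((a * f a + b * f b) / 2 + (0 - stdNormalCdf t))| ≤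
        (b - a) ^ 2 * (6 + 2 * M)) := by
  set p := gaussianPDFReal 0 1 with hp
  have hp0 : ∀ x, 0 < p x := stdNormalPDF_pos
  have ht0 := stdNormalCdf_nonneg t
  have ht1 := stdNormalCdf_le_one t
  set l : ℝ → ℝ := fun x => (1 - stdNormalCdf t) * (stdNormalCdf x / p x) with hl
  set r : ℝ → ℝ := fun x => stdNormalCdf t * ((1 - stdNormalCdf x) / p x) with hr
  have hl' : ∀ x, HasDerivAt l (x * l x + (1 - stdNormalCdf t)) x := fun x => by
    refine (((hasDerivAt_stdNormalCdf x).div (hasDerivAt_stdNormalPDF x)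
      (hp0 x).ne').const_mul _).congr_deriv ?_
    have := (hp0 x).ne'
    simp only [hl, ← hp]
    field_simp
    ring
  have hr' : ∀ x, HasDerivAt r (x * r x + (0 - stdNormalCdf t)) x := fun x => by
    refine ((((hasDerivAt_stdNormalCdf x).const_sub 1).div (hasDerivAt_stdNormalPDF x)
      (hp0 x).ne').const_mul _).congr_deriv ?_
    have := (hp0 x).ne'
    simp only [hr, ← hp]
    field_simp
    ring
  have hbound : ∀ x y, 0 ≤ y → y ≤ stdNormalCdf x * (1 - stdNormalCdf x) / p x →
      |y| ≤ 6 ∧ |x * y| ≤ 1 := by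
    intro x y hy0 hy
    obtain ⟨h1, h2⟩ := stdNormalCdf_mul_one_sub_le x
    rw [abs_mul, abs_of_nonneg hy0]
    constructor
    · refine hy.trans ?_
      rw [div_le_iff₀ (hp0 x)]
      exact h1
    · refine (mul_le_mul_of_nonneg_left hy (abs_nonneg x)).trans ?_
      rw [← mul_div_assoc, div_le_iff₀ (hp0 x), one_mul]
      exact h2
  have hlb : ∀ x ≤ t, |l x| ≤ 6 ∧ |x * l x| ≤ 1 := fun x hx => by
    have hm := stdNormalCdf_mono hx
    have h0 := stdNormalCdf_nonneg x
    refine hbound x _ (mul_nonneg (by linarith) (div_nonneg h0 (hp0 x).le)) ?_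
    simp only [hl]
    rw [← mul_div_assoc, mul_comm]
    have := hp0 x
    gcongr
  have hrb : ∀ x, t ≤ x → |r x| ≤ 6 ∧ |x * r x| ≤ 1 := fun x hx => by
    have hm := stdNormalCdf_mono hx
    have h1 : 0 ≤ 1 - stdNormalCdf x := sub_nonneg.2 (stdNormalCdf_le_one x)
    refine hbound x _ (mul_nonneg ht0 (div_nonneg h1 (hp0 x).le)) ?_
    simp only [hr]
    rw [← mul_div_assoc]
    have := hp0 x
    gcongr
  have hlr : l t = r t := by simp only [hl, hr]; ring
  set f : ℝ → ℝ := fun x => if x ≤ t then l x else r x with hf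
  have hfl : ∀ x ≤ t, f x = l x := fun x hx => if_pos hx
  have hfr : ∀ x, t ≤ x → f x = r x := fun x hx => by
    rcases hx.eq_or_lt with rfl | hx
    · rw [hfl _ le_rfl, hlr]
    · exact if_neg hx.not_ge
  refine ⟨f, fun x => ?_, fun a b M hab hb haM hbM => ?_, fun a b M hab ha haM hbM => ?_⟩
  · rcases le_total x t with h | h
    · rw [hfl x h]; exact (hlb x h).1
    · rw [hfr x h]; exact (hrb x h).1
  · rw [hfl b hb, hfl a (hab.le.trans hb)]
    exact stein_trapezoid hab (fun x _ => hl' x) (fun x hx => (hlb x (hx.2.trans hb)).1)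
      (fun x hx => (hlb x (hx.2.trans hb)).2) (abs_le.2 ⟨by linarith, by linarith⟩) haM hbM
  · rw [hfr a ha, hfr b (ha.trans hab.le)]
    exact stein_trapezoid hab (fun x _ => hr' x) (fun x hx => (hrb x (ha.trans hx.1)).1)
      (fun x hx => (hrb x (ha.trans hx.1)).2) (abs_le.2 ⟨by linarith, by linarith⟩) haM hbM

lemma tanh_le_self_of_nonneg {a : ℝ} (ha : 0 ≤ a) : tanh a ≤ a := by
  have hmono : MonotoneOn (fun x => x * cosh x - sinh x) (Set.Ici 0) := by
    have hd : ∀ x, HasDerivAt (fun x => x * cosh x - sinh x)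
        (1 * cosh x + x * sinh x - cosh x) x :=
      fun x => ((hasDerivAt_id x).mul (hasDerivAt_cosh x)).sub (hasDerivAt_sinh x)
    refine monotoneOn_of_hasDerivWithinAt_nonneg (convex_Ici 0)
      (fun x _ => (hd x).continuousAt.continuousWithinAt)
      (fun x _ => (hd x).hasDerivWithinAt) fun x hx => ?_
    rw [interior_Ici] at hx
    have := mul_nonneg (le_of_lt hx) (sinh_nonneg_iff.2 (le_of_lt hx))
    linarith
  have h := hmono Set.self_mem_Ici ha ha
  rw [tanh_eq_sinh_div_cosh, div_le_iff₀ (cosh_pos a)]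
  simpa using h

lemma one_add_tanh (a : ℝ) : 1 + tanh a = exp a / cosh a := by
  have := (cosh_pos a).ne'
  rw [tanh_eq_sinh_div_cosh, ← cosh_add_sinh]
  field_simp

lemma one_sub_tanh (a : ℝ) : 1 - tanh a = exp (-a) / cosh a := by
  have := (cosh_pos a).ne'
  rw [tanh_eq_sinh_div_cosh, ← cosh_sub_sinh]
  field_simp

lemma self_sub_sq_le_tanh {a : ℝ} (ha : 0 ≤ a) : a - a ^ 2 ≤ tanh a := by
  have hlt := Real.tanh_lt_one a
  have h1 : (1 + tanh a) = exp (2 * a) * (1 - tanh a) := by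
    rw [one_add_tanh, one_sub_tanh, ← mul_div_assoc, ← exp_add]
    ring_nf
  have h2 := Real.add_one_le_exp (2 * a)
  have h3 : (2 * a + 1) * (1 - tanh a) ≤ 1 + tanh a := by
    rw [h1]; gcongr
  have h4 : a ≤ tanh a * (1 + a) := by linarith
  nlinarith [mul_nonneg ha (mul_nonneg ha ha)]

lemma tanh_bounds (a : ℝ) : |tanh a| ≤ |a| ∧ |tanh a - a| ≤ a ^ 2 ∧ a * tanh a ≤ a ^ 2 := by
  wlog ha : 0 ≤ a generalizing a
  · have h := this (-a) (by linarith)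
    rw [tanh_neg, abs_neg, abs_neg, neg_sub_neg, abs_sub_comm, neg_mul_neg, neg_sq] at h
    exact h
  have h1 := tanh_le_self_of_nonneg ha
  have h2 := self_sub_sq_le_tanh ha
  have h0 : 0 ≤ tanh a := by
    rw [tanh_eq_sinh_div_cosh]
    exact div_nonneg (sinh_nonneg_iff.2 ha) (cosh_pos a).le
  refine ⟨by rwa [abs_of_nonneg h0, abs_of_nonneg ha], abs_le.2 ⟨by linarith, ?_⟩, by nlinarith⟩
  nlinarith [sq_nonneg a]

lemma cwSpin_not (b : Bool) : cwSpin (!b) = -cwSpin b := by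
  cases b <;> simp [cwSpin]

lemma cwS_update_not {N : ℕ} (x : Fin N → Bool) (i : Fin N) :
    cwS (Function.update x i (!x i)) = cwS x - 2 * cwSpin (x i) := by
  unfold cwS
  rw [← Finset.add_sum_erase _ _ (Finset.mem_univ i),
    ← Finset.add_sum_erase _ (fun j => cwSpin (x j)) (Finset.mem_univ i), Function.update_self,
    cwSpin_not, Finset.sum_congr rfl fun j hj => by
      rw [Function.update_of_ne (Finset.ne_of_mem_erase hj)]]
  ring

lemma abs_cwS_le {N : ℕ} (x : Fin N → Bool) : |cwS x| ≤ N := by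
  refine (Finset.abs_sum_le_sum_abs _ _).trans ?_
  have : ∀ i, |cwSpin (x i)| = 1 := fun i => by cases x i <;> simp [cwSpin]
  simp [this]

lemma exists_cwS_eq {N : ℕ} (x : Fin N → Bool) : ∃ k : ℤ, cwS x = N + 2 * k := by
  refine ⟨∑ i, if x i then 0 else -1, ?_⟩
  have : (N : ℝ) = ∑ _i : Fin N, (1 : ℝ) := by simp
  rw [this, cwS]
  push_cast
  rw [Finset.mul_sum, ← Finset.sum_add_distrib]
  refine Finset.sum_congr rfl fun i _ => ?_
  cases x i <;> simp [cwSpin]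
  norm_num

lemma cwZ_pos (β : ℝ) (N : ℕ) : 0 < cwZ β N :=
  Finset.sum_pos (fun _ _ => exp_pos _) Finset.univ_nonempty

lemma cwProb_nonneg (β : ℝ) {N : ℕ} (x : Fin N → Bool) : 0 ≤ cwProb β x :=
  div_nonneg (exp_pos _).le (cwZ_pos β N).le

lemma sum_cwProb (β : ℝ) (N : ℕ) : ∑ x : Fin N → Bool, cwProb β x = 1 := by
  simp_rw [cwProb]
  rw [← Finset.sum_div]
  exact div_self (cwZ_pos β N).ne'

lemma cwWeight_update_not (β : ℝ) {N : ℕ} (x : Fin N → Bool) (i : Fin N) (hx : x i = true) :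
    cwWeight β (Function.update x i (!x i)) * (1 + tanh (β * (cwS x - 1) / N)) =
      cwWeight β x * (1 - tanh (β * (cwS x - 1) / N)) := by
  have hN : (N : ℝ) ≠ 0 := Nat.cast_ne_zero.2 (Fin.pos i).ne'
  rw [one_add_tanh, one_sub_tanh, ← mul_div_assoc, ← mul_div_assoc, cwWeight, cwWeight,
    cwS_update_not, ← exp_add, ← exp_add]
  congr 2
  simp only [hx, cwSpin, if_true]
  field_simp
  ring

/-- Single-spin flips leave the Curie–Weiss law invariant after reweighting by the conditional
law of a spin given the others. -/
lemma sum_cwProb_flip (β : ℝ) (N : ℕ) (G : ℝ → ℝ) :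
    ∑ x : Fin N → Bool, cwProb β x *
      ((N + cwS x) * (1 - tanh (β * (cwS x - 1) / N)) * G (cwS x - 1) -
        (N - cwS x) * (1 + tanh (β * (cwS x + 1) / N)) * G (cwS x + 1)) = 0 := by
  have hsite : ∀ i : Fin N, ∑ x : Fin N → Bool, cwProb β x *
      ((1 + cwSpin (x i)) * (1 - tanh (β * (cwS x - 1) / N)) * G (cwS x - 1)) =
      ∑ x : Fin N → Bool, cwProb β x *
        ((1 - cwSpin (x i)) * (1 + tanh (β * (cwS x + 1) / N)) * G (cwS x + 1)) := by
    intro i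
    have hinv : Function.Involutive (fun x : Fin N → Bool => Function.update x i (!x i)) :=
      fun x => by simp
    refine Fintype.sum_equiv hinv.toPerm _ _ fun x => ?_
    simp only [Function.Involutive.coe_toPerm, cwS_update_not, Function.update_self, cwSpin_not]
    cases hx : x i
    · simp [cwSpin]
    · have h := cwWeight_update_not β x i hx
      rw [hx] at h
      simp only [cwSpin, if_true, cwProb]
      rw [show cwS x - 2 * 1 + 1 = cwS x - 1 by ring]
      linear_combination (-(1 + 1) * G (cwS x - 1) / cwZ β N) * h
  have hN : (N : ℝ) = ∑ _i : Fin N, (1 : ℝ) := by simp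
  have hplus : ∀ x : Fin N → Bool, N + cwS x = ∑ i, (1 + cwSpin (x i)) := fun x => by
    rw [Finset.sum_add_distrib, ← hN, cwS]
  have hminus : ∀ x : Fin N → Bool, N - cwS x = ∑ i, (1 - cwSpin (x i)) := fun x => by
    rw [Finset.sum_sub_distrib, ← hN, cwS]
  rw [Finset.sum_congr rfl fun x _ => mul_sub _ _ _, Finset.sum_sub_distrib]
  simp_rw [hplus, hminus, Finset.sum_mul, Finset.mul_sum]
  rw [Finset.sum_comm, Finset.sum_congr rfl fun i _ => hsite i, Finset.sum_comm, sub_self]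

lemma sum_cwProb_sq_le {β : ℝ} (hβ0 : 0 < β) (hβ1 : β < 1) {N : ℕ} (hN : 1 ≤ N) :
    ∑ x : Fin N → Bool, cwProb β x * cwS x ^ 2 ≤ 2 * N / (1 - β) := by
  have hN1 : (1 : ℝ) ≤ N := by exact_mod_cast hN
  have hN0 : (0 : ℝ) < N := by linarith
  have h := sum_cwProb_flip β N (fun s => s)
  have htan : ∀ s : ℝ, s * tanh (β * s / N) ≤ β * s ^ 2 / N := fun s => by
    have h1 := (tanh_bounds (β * s / N)).2.2
    have h2 : 0 < N / β := by positivity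
    have h3 := mul_le_mul_of_nonneg_left h1 h2.le
    calc s * tanh (β * s / N) = N / β * (β * s / N * tanh (β * s / N)) := by field_simp
      _ ≤ N / β * (β * s / N) ^ 2 := h3
      _ = β * s ^ 2 / N := by field_simp
  have hpt : ∀ x : Fin N → Bool, 2 * (1 - β) * cwS x ^ 2 - 2 * (N + β) ≤
      (N + cwS x) * (1 - tanh (β * (cwS x - 1) / N)) * (cwS x - 1) -
        (N - cwS x) * (1 + tanh (β * (cwS x + 1) / N)) * (cwS x + 1) := by
    intro x
    have hS := abs_le.1 (abs_cwS_le x)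
    have h1 := mul_le_mul_of_nonneg_left (htan (cwS x - 1)) (by linarith : 0 ≤ N + cwS x)
    have h2 := mul_le_mul_of_nonneg_left (htan (cwS x + 1)) (by linarith : 0 ≤ N - cwS x)
    have h3 : (N + cwS x) * (β * (cwS x - 1) ^ 2 / N) + (N - cwS x) * (β * (cwS x + 1) ^ 2 / N)
        = 2 * β * (cwS x ^ 2 + 1) - 4 * β * cwS x ^ 2 / N := by
      field_simp
      ring
    have h4 : 0 ≤ 4 * β * cwS x ^ 2 / N := by positivity
    linarith
  have hsum := Finset.sum_le_sum fun x (_ : x ∈ Finset.univ) =>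
    mul_le_mul_of_nonneg_left (hpt x) (cwProb_nonneg β x)
  rw [h] at hsum
  have hexp : ∑ x : Fin N → Bool, cwProb β x * (2 * (1 - β) * cwS x ^ 2 - 2 * (N + β)) =
      2 * (1 - β) * ∑ x : Fin N → Bool, cwProb β x * cwS x ^ 2 - 2 * (N + β) := by
    simp_rw [mul_sub]
    rw [Finset.sum_sub_distrib, ← Finset.sum_mul, sum_cwProb, one_mul, Finset.mul_sum]
    congr 1
    exact Finset.sum_congr rfl fun x _ => by ring
  rw [hexp] at hsum
  rw [le_div_iff₀ (by linarith)]
  nlinarith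

lemma abs_flip_coeff_le {β n : ℝ} (hβ0 : 0 < β) (hβ1 : β < 1) (hn : 1 ≤ n) (S : ℝ) :
    |1 + (β * (S - 1) - n * tanh (β * (S - 1) / n)) - S * tanh (β * (S - 1) / n)| ≤
      4 * (1 + S ^ 2 / n) := by
  have hn0 : 0 < n := by linarith
  have hn1 : 1 / n ≤ 1 := by rw [div_le_one hn0]; exact hn
  obtain ⟨h1, h2, -⟩ := tanh_bounds (β * (S - 1) / n)
  set T := tanh (β * (S - 1) / n)
  have hlin : |β * (S - 1) - n * T| ≤ (S - 1) ^ 2 / n := by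
    have : β * (S - 1) - n * T = -(n * (T - β * (S - 1) / n)) := by field_simp; ring
    rw [this, abs_neg, abs_mul, abs_of_pos hn0]
    calc n * |T - β * (S - 1) / n| ≤ n * (β * (S - 1) / n) ^ 2 := by gcongr
      _ = β ^ 2 * ((S - 1) ^ 2 / n) := by field_simp
      _ ≤ 1 * ((S - 1) ^ 2 / n) := by gcongr; nlinarith
      _ = (S - 1) ^ 2 / n := one_mul _
  have hT : |T| ≤ (|S| + 1) / n := by
    refine h1.trans ?_
    rw [abs_div, abs_mul, abs_of_pos hβ0, abs_of_pos hn0]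
    have hS1 : |S - 1| ≤ |S| + 1 := by simpa using abs_sub S 1
    gcongr
    nlinarith [abs_nonneg (S - 1)]
  have hprod : |S * T| ≤ 2 * (S ^ 2 / n) + 1 / n := by
    calc |S * T| = |S| * |T| := abs_mul _ _
      _ ≤ |S| * ((|S| + 1) / n) := mul_le_mul_of_nonneg_left hT (abs_nonneg S)
      _ = (|S| ^ 2 + |S|) / n := by ring
      _ ≤ (2 * |S| ^ 2 + 1) / n :=
        div_le_div_of_nonneg_right (by nlinarith [sq_nonneg (|S| - 1)]) hn0.le
      _ = 2 * (S ^ 2 / n) + 1 / n := by rw [sq_abs]; ring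
  have hsq : (S - 1) ^ 2 / n ≤ 2 * (S ^ 2 / n) + 2 * (1 / n) := by
    calc (S - 1) ^ 2 / n ≤ (2 * S ^ 2 + 2) / n :=
          div_le_div_of_nonneg_right (by nlinarith [sq_nonneg (S + 1)]) hn0.le
      _ = 2 * (S ^ 2 / n) + 2 * (1 / n) := by ring
  have h3 := abs_le.1 hlin
  have h4 := abs_le.1 hprod
  have h5 : 0 ≤ S ^ 2 / n := by positivity
  exact abs_le.2 ⟨by linarith, by linarith⟩

lemma stein_cell_error_le {β n σ : ℝ} (hβ0 : 0 < β) (hβ1 : β < 1) (hn : 1 ≤ n)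
    (hσ : 0 < σ) (hσn : σ ^ 2 * (1 - β) = n) (S : ℝ) :
    n * (((S + 1) / σ - (S - 1) / σ) ^ 2 * (6 + 2 * ((|S| + 1) / σ))) ≤
      40 * (1 + S ^ 2 / n) := by
  have hn0 : 0 < n := by linarith
  have hσn' : n ≤ σ ^ 2 := by nlinarith [sq_nonneg σ]
  have hσ1 : 1 ≤ σ := by nlinarith
  have hSσ : (|S| + 1) / σ ≤ 2 + S ^ 2 / n := by
    have h1 : |S| / σ ≤ 1 + (|S| / σ) ^ 2 := by nlinarith [sq_nonneg (|S| / σ - 1)]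
    have h2 : (|S| / σ) ^ 2 ≤ S ^ 2 / n := by
      rw [div_pow, sq_abs]; gcongr
    have h3 : 1 / σ ≤ 1 := by rw [div_le_one hσ]; exact hσ1
    rw [add_div]; linarith
  have hq0 : 0 ≤ S ^ 2 / n := by positivity
  have hB : 0 ≤ 6 + 2 * ((|S| + 1) / σ) := by positivity
  calc n * (((S + 1) / σ - (S - 1) / σ) ^ 2 * (6 + 2 * ((|S| + 1) / σ)))
      = 4 * (1 - β) * (6 + 2 * ((|S| + 1) / σ)) := by
        rw [← hσn, show ((S + 1) / σ - (S - 1) / σ) ^ 2 = 4 / σ ^ 2 by ring]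
        field_simp
    _ ≤ 4 * 1 * (6 + 2 * (2 + S ^ 2 / n)) := by gcongr; linarith
    _ ≤ 40 * (1 + S ^ 2 / n) := by linarith

/-- Pointwise comparison of the flip identity with Stein's equation. -/
lemma abs_flip_add_stein_le {β n S σ gm gp h : ℝ} (hβ0 : 0 < β) (hβ1 : β < 1) (hn : 1 ≤ n)
    (hσ : 0 < σ) (hσn : σ ^ 2 * (1 - β) = n) (hgm : |gm| ≤ 6) (hgp : |gp| ≤ 6)
    (hcell : |gp - gm - ((S + 1) / σ - (S - 1) / σ) *
      (((S - 1) / σ * gm + (S + 1) / σ * gp) / 2 + h)| ≤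
        ((S + 1) / σ - (S - 1) / σ) ^ 2 * (6 + 2 * ((|S| + 1) / σ))) :
    |(n + S) * (1 - tanh (β * (S - 1) / n)) * gm - (n - S) * (1 + tanh (β * (S + 1) / n)) * gp
      + 2 * n / σ * h| ≤ 88 * (1 + S ^ 2 / n) := by
  have hn0 : 0 < n := by linarith
  have hcm := abs_flip_coeff_le hβ0 hβ1 hn S
  have hcp := abs_flip_coeff_le hβ0 hβ1 hn (-S)
  rw [show β * (-S - 1) / n = -(β * (S + 1) / n) by ring, tanh_neg, neg_sq] at hcp
  have hR : n * (gp - gm - ((S + 1) / σ - (S - 1) / σ) *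
      (((S - 1) / σ * gm + (S + 1) / σ * gp) / 2 + h)) =
      n * (gp - gm) - (1 - β) * ((S - 1) * gm + (S + 1) * gp) - 2 * n / σ * h := by
    rw [← hσn]
    field_simp
    ring
  have hcell' := (mul_le_mul_of_nonneg_left hcell hn0.le).trans
    (stein_cell_error_le hβ0 hβ1 hn hσ hσn S)
  rw [← abs_of_pos hn0, ← abs_mul, abs_of_pos hn0, hR] at hcell'
  generalize tanh (β * (S - 1) / n) = Tm at *
  generalize tanh (β * (S + 1) / n) = Tp at *
  have hq : 0 ≤ S ^ 2 / n := by positivity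
  have i1 := mul_le_mul hcm hgm (abs_nonneg _) (by positivity)
  have i2 := mul_le_mul hcp hgp (abs_nonneg _) (by positivity)
  rw [← abs_mul] at i1 i2
  rw [abs_le] at i1 i2 hcell' ⊢
  constructor <;> linarith [i1.1, i1.2, i2.1, i2.2, hcell'.1, hcell'.2]

/-- The Kolmogorov bound at a point `m / σ` lying strictly between atoms. -/
lemma abs_sum_indicator_sub_stdNormalCdf_le {β : ℝ} (hβ0 : 0 < β) (hβ1 : β < 1) {N : ℕ}
    (hN : 1 ≤ N) {σ m : ℝ} (hσ : 0 < σ) (hσN : σ ^ 2 * (1 - β) = N) (A : Set (Fin N → Bool))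
    (hA : ∀ x ∈ A, cwS x + 1 ≤ m) (hA' : ∀ x ∉ A, m ≤ cwS x - 1) :
    |∑ x, A.indicator (cwProb β) x - stdNormalCdf (m / σ)| ≤
      44 * (1 + 2 / (1 - β)) * (σ / N) := by
  classical
  have hN1 : (1 : ℝ) ≤ N := by exact_mod_cast hN
  have hN0 : (0 : ℝ) < N := by linarith
  obtain ⟨f, hf6, hleft, hright⟩ := exists_stein_solution (m / σ)
  set c := stdNormalCdf (m / σ)
  set D : ℝ := ∑ x, A.indicator (cwProb β) x - c with hD
  have hDsum : D = ∑ x, cwProb β x * (A.indicator 1 x - c) := by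
    simp_rw [mul_sub]
    rw [Finset.sum_sub_distrib, ← Finset.sum_mul, sum_cwProb, one_mul, hD]
    congr 1
    exact Finset.sum_congr rfl fun x _ => by by_cases hx : x ∈ A <;> simp [hx]
  have hflip := sum_cwProb_flip β N (fun s => f (s / σ))
  have hpt : ∀ x : Fin N → Bool,
      |(N + cwS x) * (1 - tanh (β * (cwS x - 1) / N)) * f ((cwS x - 1) / σ) -
        (N - cwS x) * (1 + tanh (β * (cwS x + 1) / N)) * f ((cwS x + 1) / σ)
        + 2 * N / σ * (A.indicator 1 x - c)| ≤ 88 * (1 + cwS x ^ 2 / N) := by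
    intro x
    refine abs_flip_add_stein_le hβ0 hβ1 hN1 hσ hσN (hf6 _) (hf6 _) ?_
    have hab : (cwS x - 1) / σ < (cwS x + 1) / σ := by gcongr; linarith
    have ha : |(cwS x - 1) / σ| ≤ (|cwS x| + 1) / σ := by
      rw [abs_div, abs_of_pos hσ]; gcongr; simpa using abs_sub (cwS x) 1
    have hb : |(cwS x + 1) / σ| ≤ (|cwS x| + 1) / σ := by
      rw [abs_div, abs_of_pos hσ]; gcongr; simpa using abs_add_le (cwS x) 1
    by_cases hx : x ∈ A
    · have := hleft _ _ _ hab (by have := hA x hx; gcongr) ha hb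
      simpa [hx] using this
    · have := hright _ _ _ hab (by have := hA' x hx; gcongr) ha hb
      simpa [hx] using this
  have hkey : 2 * N / σ * D = ∑ x : Fin N → Bool, cwProb β x *
      ((N + cwS x) * (1 - tanh (β * (cwS x - 1) / N)) * f ((cwS x - 1) / σ) -
        (N - cwS x) * (1 + tanh (β * (cwS x + 1) / N)) * f ((cwS x + 1) / σ)
        + 2 * N / σ * (A.indicator 1 x - c)) := by
    rw [Finset.sum_congr rfl fun x _ => mul_add _ _ _, Finset.sum_add_distrib, hflip, zero_add,
      hDsum, Finset.mul_sum]
    exact Finset.sum_congr rfl fun x _ => by ring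
  have hbound : |2 * N / σ * D| ≤ 88 * (1 + 2 / (1 - β)) := by
    rw [hkey]
    calc _ ≤ ∑ x : Fin N → Bool, cwProb β x * (88 * (1 + cwS x ^ 2 / N)) := by
          refine (Finset.abs_sum_le_sum_abs _ _).trans (Finset.sum_le_sum fun x _ => ?_)
          rw [abs_mul, abs_of_nonneg (cwProb_nonneg β x)]
          exact mul_le_mul_of_nonneg_left (hpt x) (cwProb_nonneg β x)
      _ = 88 * (1 + (∑ x : Fin N → Bool, cwProb β x * cwS x ^ 2) / N) := by
          nth_rewrite 2 [← sum_cwProb β N]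
          rw [Finset.sum_div, ← Finset.sum_add_distrib, Finset.mul_sum]
          exact Finset.sum_congr rfl fun x _ => by ring
      _ ≤ 88 * (1 + 2 * N / (1 - β) / N) := by
          gcongr; exact sum_cwProb_sq_le hβ0 hβ1 hN
      _ = 88 * (1 + 2 / (1 - β)) := by field_simp
  rw [abs_mul, abs_of_pos (by positivity : 0 < 2 * (N : ℝ) / σ)] at hbound
  calc |D| = 2 * N / σ * |D| * (σ / (2 * N)) := by field_simp
    _ ≤ 88 * (1 + 2 / (1 - β)) * (σ / (2 * N)) := by gcongr
    _ = 44 * (1 + 2 / (1 - β)) * (σ / N) := by field_simp; ring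

/-- **CLT for the subcritical Curie–Weiss model (Kolmogorov distance)**:
`d_Kol(W, Z) ≤ C/√N`. -/
theorem curie_weiss_kolmogorov_clt (β : ℝ) (hβ0 : 0 < β) (hβ1 : β < 1) :
    ∃ C : ℝ, 0 < C ∧ ∀ N : ℕ, 1 ≤ N → ∀ t : ℝ,
      |(∑ x : Fin N → Bool,
            Set.indicator {x' : Fin N → Bool | cwW β x' ≤ t} (cwProb β) x) -
          ((gaussianReal 0 1) (Set.Iic t)).toReal| ≤ C / Real.sqrt N := by
  have hβ : 0 < 1 - β := sub_pos.2 hβ1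
  refine ⟨44 * (1 + 2 / (1 - β)) / √(1 - β) + 1, by positivity, fun N hN t => ?_⟩
  have hN1 : (1 : ℝ) ≤ N := by exact_mod_cast hN
  have hN0 : (0 : ℝ) < N := by linarith
  set σ := √((N : ℝ) / (1 - β)) with hσdef
  have hσ : 0 < σ := by positivity
  have hσN : σ ^ 2 * (1 - β) = N := by
    rw [hσdef, sq_sqrt (by positivity)]; field_simp
  set k : ℤ := ⌊(t * σ - N) / 2⌋ with hk
  have hk1 : N + 2 * (k : ℝ) ≤ t * σ := by
    have := Int.floor_le ((t * σ - N) / 2)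
    rw [← hk] at this; linarith
  have hk2 : t * σ < N + 2 * (k : ℝ) + 2 := by
    have := Int.lt_floor_add_one ((t * σ - N) / 2)
    rw [← hk] at this; linarith
  set m : ℝ := N + 2 * k + 1 with hm
  have hmain := abs_sum_indicator_sub_stdNormalCdf_le hβ0 hβ1 hN (m := m) hσ hσN
    {x' : Fin N → Bool | cwW β x' ≤ t}
    (fun x hx => by
      obtain ⟨j, hj⟩ := exists_cwS_eq x
      have hx' : cwS x ≤ t * σ := (div_le_iff₀ hσ).1 hx
      have : (j : ℝ) < k + 1 := by linarith
      have : j ≤ k := by exact_mod_cast Int.lt_add_one_iff.1 (by exact_mod_cast this)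
      have : (j : ℝ) ≤ k := by exact_mod_cast this
      linarith)
    (fun x hx => by
      obtain ⟨j, hj⟩ := exists_cwS_eq x
      have hx' : t * σ < cwS x := by
        rw [← lt_div_iff₀ hσ]; exact not_le.1 hx
      have : (k : ℝ) < j := by linarith
      have : k + 1 ≤ j := by exact_mod_cast this
      have : (k : ℝ) + 1 ≤ j := by exact_mod_cast this
      linarith)
  have hshift : |stdNormalCdf (m / σ) - stdNormalCdf t| ≤ 1 / σ := by
    refine stdNormalCdf_sub_le.trans ?_
    rw [show m / σ - t = (m - t * σ) / σ by field_simp, abs_div, abs_of_pos hσ]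
    gcongr
    exact abs_le.2 ⟨by linarith, by linarith⟩
  have hσeq : σ = √N / √(1 - β) := by rw [hσdef, sqrt_div hN0.le]
  have hinv : 1 / σ ≤ 1 / √N := by
    have : √(N : ℝ) ≤ σ := sqrt_le_sqrt (by rw [le_div_iff₀ hβ]; nlinarith)
    have : 0 < √(N : ℝ) := by positivity
    gcongr
  have hratio : σ / N = 1 / √(1 - β) / √N := by
    rw [hσeq]
    have h := sq_sqrt hN0.le
    have : 0 < √(1 - β) := by positivity
    have : 0 < √(N : ℝ) := by positivity
    field_simp
    exact h
  change |_ - stdNormalCdf t| ≤ _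
  refine (abs_sub_le _ (stdNormalCdf (m / σ)) _).trans ?_
  rw [hratio] at hmain
  refine (add_le_add hmain (hshift.trans hinv)).trans_eq ?_
  ring
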